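/- Let G be a finite simple graph, let r ≥ 2 be an integer, and let t, x_1, …, x_{r−1} be nonzero complex numbers. For f : E → Fin r, the product Π_{v ∈ V} w_v(f) is nonzero if and only if the set S of edges e with f(e) ≠ r is a cycle in G (i.e., every vertex incident to an edge of S is incident to exactly two edges of S) and f is constant on each connected component of S (each connected component is monochromatic in a color from {1, …, r−1}). -/

import Mathlib

open scoped Classical

/-- The finset of edges of `G` incident to the vertex `v`. -/
noncomputable def incidentEdges {V : Type*} [Fintype V] [DecidableEq V]
    (G : SimpleGraph V) (v : V) : Finset G.edgeSet :=
  Finset.univ.filter (fun e => v ∈ (e : Sym2 V))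

/-- The local weight `w_v(f)`: colors are the elements of `Fin (m+1)`, the last color
playing the role of the color `r = m+1`.  The weight is `t` if every edge incident to `v`
has the last color (in particular if `v` is isolated), `x i` if the multiset of colors of
the edges incident to `v` consists of exactly two copies of the color `i` (with
`i ∈ {1, …, r-1}`) together with `deg v - 2` copies of the last color, and `0` otherwise. -/
noncomputable def localWeight {V : Type*} [Fintype V] [DecidableEq V]
    (G : SimpleGraph V) {m : ℕ} (t : ℂ) (x : Fin m → ℂ)
    (f : G.edgeSet → Fin (m + 1)) (v : V) : ℂ :=
  if ∀ e ∈ incidentEdges G v, f e = Fin.last m then t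
  else ∑ i : Fin m,
    if ((incidentEdges G v).filter (fun e => f e = i.castSucc)).card = 2 ∧
        (∀ e ∈ incidentEdges G v, f e = i.castSucc ∨ f e = Fin.last m)
    then x i else 0

/-- A (multi)cycle in `G`: a set of edges such that every vertex incident to an edge of
the set is incident to exactly two edges of the set.  It need not be connected. -/
def IsMultiCycle {V : Type*} [Fintype V] [DecidableEq V]
    (G : SimpleGraph V) (C : Finset G.edgeSet) : Prop :=
  ∀ v : V, (∃ e ∈ C, v ∈ (e : Sym2 V)) →
    (C.filter (fun e => v ∈ (e : Sym2 V))).card = 2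

/-- The graph on `V` whose edges are the edges of `C`. -/
def cycleGraph {V : Type*} [Fintype V] [DecidableEq V]
    (G : SimpleGraph V) (C : Finset G.edgeSet) : SimpleGraph V :=
  SimpleGraph.fromEdgeSet (↑(C.image (fun e => (e : Sym2 V))))

/-!
Both sides are local conditions at the vertices. The coloring is constant on the connected
components of `S` as soon as any two edges of `S` sharing a vertex have the same color, because
each edge of a walk shares a vertex with the next one. At a single vertex `v`, the weight is
nonzero exactly when `v` meets no edge of `S`, or meets two of them, of equal color.
-/

theorem sum_ite_ne_zero_iff {ι M : Type*} [Fintype ι] [AddCommMonoid M] {p : ι → Prop}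
    [DecidablePred p] {x : ι → M} (hp : ∀ i j, p i → p j → i = j) (hx : ∀ i, p i → x i ≠ 0) :
    (∑ i, if p i then x i else 0) ≠ 0 ↔ ∃ i, p i := by
  constructor
  · intro hsum
    obtain ⟨i, -, hi⟩ := Finset.exists_ne_zero_of_sum_ne_zero hsum
    exact ⟨i, (ite_ne_right_iff.1 hi).1⟩
  · rintro ⟨i, hi⟩
    rw [Fintype.sum_eq_single i fun j hji => if_neg fun hj => hji (hp j i hj hi), if_pos hi]
    exact hx i hi

theorem exists_card_filter_eq_castSucc_iff {ι : Type*} {m n : ℕ} (s : Finset ι)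
    (f : ι → Fin (m + 1)) (hn : n ≠ 0) :
    (∃ i : Fin m, (s.filter fun e => f e = i.castSucc).card = n ∧
        ∀ e ∈ s, f e = i.castSucc ∨ f e = Fin.last m) ↔
      (s.filter fun e => f e ≠ Fin.last m).card = n ∧
        ∀ e ∈ s.filter fun e => f e ≠ Fin.last m,
          ∀ e' ∈ s.filter fun e => f e ≠ Fin.last m, f e = f e' := by
  have filter_eq {i : Fin m} (hi : ∀ e ∈ s, f e = i.castSucc ∨ f e = Fin.last m) :
      (s.filter fun e => f e = i.castSucc) = s.filter fun e => f e ≠ Fin.last m :=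
    Finset.filter_congr fun e he =>
      ⟨fun h => h ▸ Fin.castSucc_ne_last i, (hi e he).resolve_right⟩
  constructor
  · rintro ⟨i, hcard, hi⟩
    rw [← filter_eq hi]
    refine ⟨hcard, fun e he e' he' => ?_⟩
    exact (Finset.mem_filter.1 he).2.trans (Finset.mem_filter.1 he').2.symm
  · rintro ⟨hcard, hmono⟩
    obtain ⟨e₀, he₀⟩ := Finset.card_ne_zero.1 (hcard ▸ hn)
    obtain ⟨i, hi⟩ := Fin.exists_castSucc_eq.2 (Finset.mem_filter.1 he₀).2
    have two_colors : ∀ e ∈ s, f e = i.castSucc ∨ f e = Fin.last m := fun e he =>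
      or_iff_not_imp_right.2 fun hlast =>
        (hmono e (Finset.mem_filter.2 ⟨he, hlast⟩) e₀ he₀).trans hi.symm
    exact ⟨i, (filter_eq two_colors).symm ▸ hcard, two_colors⟩

-- `IsMultiCycle` and `cycleGraph` coerce `Finset G.edgeSet` to `Finset (Sym2 V)` through the
-- monad structure of `Finset`.
theorem bind_pure_coe_eq_image {α : Type*} [DecidableEq α] {s : Set α} (C : Finset s) :
    (C >>= fun e => pure (e : α)) = C.image Subtype.val := by
  ext a
  simp [eq_comm]

section

variable {V : Type*} [Fintype V] {G : SimpleGraph V} {m : ℕ} {f : G.edgeSet → Fin (m + 1)}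

/-- The set `S` of edges whose color is not the last one: the candidate for a cycle in `G`. -/
noncomputable def nonLastEdges (f : G.edgeSet → Fin (m + 1)) : Finset G.edgeSet :=
  Finset.univ.filter fun e : G.edgeSet => f e ≠ Fin.last m

theorem mem_nonLastEdges {e : G.edgeSet} : e ∈ nonLastEdges f ↔ f e ≠ Fin.last m :=
  Finset.mem_filter_univ e

variable [DecidableEq V]

theorem isMultiCycle_iff {C : Finset G.edgeSet} :
    IsMultiCycle G C ↔ ∀ v : V, (∃ e ∈ C, v ∈ (e : Sym2 V)) →
      (C.filter fun e : G.edgeSet => v ∈ (e : Sym2 V)).card = 2 := by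
  refine forall_congr' fun v => imp_congr_right fun _ => ?_
  rw [bind_pure_coe_eq_image, Finset.filter_image,
    Finset.card_image_of_injective _ Subtype.val_injective]

theorem cycleGraph_adj {C : Finset G.edgeSet} {u v : V} :
    (cycleGraph G C).Adj u v ↔ ∃ e ∈ C, (e : Sym2 V) = s(u, v) := by
  rw [cycleGraph, bind_pure_coe_eq_image, Finset.image_id', SimpleGraph.fromEdgeSet_adj,
    Finset.mem_coe, Finset.mem_image]
  refine and_iff_left_of_imp ?_
  rintro ⟨e, -, he⟩
  exact (G.mem_edgeSet.1 (he ▸ e.2)).ne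

theorem forall_reachable_eq_iff_forall_incident_eq {α : Type*} {C : Finset G.edgeSet}
    {c : G.edgeSet → α} :
    (∀ e e' : G.edgeSet, e ∈ C → e' ∈ C →
        (∃ u v : V, u ∈ (e : Sym2 V) ∧ v ∈ (e' : Sym2 V) ∧ (cycleGraph G C).Reachable u v) →
        c e = c e') ↔
      ∀ v : V, ∀ e e' : G.edgeSet, e ∈ C → e' ∈ C →
        v ∈ (e : Sym2 V) → v ∈ (e' : Sym2 V) → c e = c e' := by
  constructor
  · exact fun hreach v e e' he he' hv hv' => hreach e e' he he' ⟨v, v, hv, hv', .rfl⟩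
  · rintro hinc e e' he he' ⟨u, v, hu, hv, ⟨p⟩⟩
    induction p generalizing e with
    | nil => exact hinc _ e e' he he' hu hv
    | cons hadj _ ih =>
      obtain ⟨d, hd, hd_eq⟩ := cycleGraph_adj.1 hadj
      calc
        c e = c d := hinc _ e d he hd hu (hd_eq ▸ Sym2.mem_mk_left _ _)
        _ = c e' := ih d hd (hd_eq ▸ Sym2.mem_mk_right _ _) hv

variable {t : ℂ} {x : Fin m → ℂ} {v : V}

theorem localWeight_ne_zero_iff (ht : t ≠ 0) (hx : ∀ i, x i ≠ 0) :
    localWeight G t x f v ≠ 0 ↔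
      (∀ e ∈ incidentEdges G v, f e = Fin.last m) ∨
        ∃ i : Fin m, ((incidentEdges G v).filter fun e => f e = i.castSucc).card = 2 ∧
          ∀ e ∈ incidentEdges G v, f e = i.castSucc ∨ f e = Fin.last m := by
  unfold localWeight
  split_ifs with hlast
  · exact iff_of_true ht (.inl hlast)
  · rw [or_iff_right hlast]
    refine sum_ite_ne_zero_iff (fun i j hi hj => ?_) fun i _ => hx i
    push Not at hlast
    obtain ⟨e, he, he_ne⟩ := hlast
    exact Fin.castSucc_injective m <|
      ((hi.2 e he).resolve_right he_ne).symm.trans ((hj.2 e he).resolve_right he_ne)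

theorem filter_incidentEdges_ne_last :
    ((incidentEdges G v).filter fun e => f e ≠ Fin.last m) =
      (nonLastEdges f).filter fun e : G.edgeSet => v ∈ (e : Sym2 V) :=
  Finset.filter_comm _ _ _

theorem localWeight_ne_zero_iff_nonLastEdges (ht : t ≠ 0) (hx : ∀ i, x i ≠ 0) :
    localWeight G t x f v ≠ 0 ↔
      ((∃ e ∈ nonLastEdges f, v ∈ (e : Sym2 V)) →
        ((nonLastEdges f).filter fun e : G.edgeSet => v ∈ (e : Sym2 V)).card = 2) ∧
      ∀ e e' : G.edgeSet, e ∈ nonLastEdges f → e' ∈ nonLastEdges f →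
        v ∈ (e : Sym2 V) → v ∈ (e' : Sym2 V) → f e = f e' := by
  rw [localWeight_ne_zero_iff ht hx, exists_card_filter_eq_castSucc_iff _ _ two_ne_zero,
    filter_incidentEdges_ne_last]
  have all_last_iff : (∀ e ∈ incidentEdges G v, f e = Fin.last m) ↔
      ¬∃ e ∈ nonLastEdges f, v ∈ (e : Sym2 V) := by
    simp only [incidentEdges, Finset.mem_filter_univ, mem_nonLastEdges]
    grind
  rw [all_last_iff]
  by_cases hmeet : ∃ e ∈ nonLastEdges f, v ∈ (e : Sym2 V)
  · rw [or_iff_right (not_not_intro hmeet), forall_prop_of_true hmeet]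
    refine and_congr_right fun _ => ?_
    simp only [Finset.mem_filter]
    grind
  · exact iff_of_true (.inl hmeet)
      ⟨fun h => absurd h hmeet, fun e _ he _ hv _ => absurd ⟨e, he, hv⟩ hmeet⟩

end

/-- For `r = m + 1 ≥ 2` colors and nonzero `t, x_1, …, x_{r-1}`, the product
`Π_v w_v(f)` is nonzero if and only if the set `S` of edges not colored with the last
color is a cycle in `G` and `f` is constant on each connected component of `S`. -/
theorem product_of_weights_ne_zero_iff
    {V : Type*} [Fintype V] [DecidableEq V] (G : SimpleGraph V)
    (m : ℕ) (hm : 1 ≤ m) (t : ℂ) (x : Fin m → ℂ)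
    (ht : t ≠ 0) (hx : ∀ i : Fin m, x i ≠ 0)
    (f : G.edgeSet → Fin (m + 1)) :
    (∏ v : V, localWeight G t x f v) ≠ 0 ↔
      (IsMultiCycle G (Finset.univ.filter (fun e : G.edgeSet => f e ≠ Fin.last m)) ∧
        ∀ e e' : G.edgeSet, f e ≠ Fin.last m → f e' ≠ Fin.last m →
          (∃ u v : V, u ∈ (e : Sym2 V) ∧ v ∈ (e' : Sym2 V) ∧
            (cycleGraph G
              (Finset.univ.filter (fun e : G.edgeSet => f e ≠ Fin.last m))).Reachable u v) →
          f e = f e') := by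
  rw [Finset.prod_ne_zero_iff]
  simp only [Finset.mem_univ, true_imp_iff, localWeight_ne_zero_iff_nonLastEdges ht hx,
    forall_and]
  rw [← isMultiCycle_iff, ← forall_reachable_eq_iff_forall_incident_eq]
  simp only [mem_nonLastEdges]
  rfl
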